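/- arXiv:2010.08508 — 2 statements merged into one kernel-verified Lean document; each statement's English description precedes it below -/
import Mathlib

section
/- (Lemma A.1) Let A and B be {0,1}-valued random variables on a common probability space with E[A] > 0 and E[B] > 0. Then |E[A | B = 1] − E[A]| ≤ sqrt(I(A;B)/2) / E[B]. -/
/-!
Write `x i j = Pr[A = i, B = j]`, `a i = Pr[A = i]`, `b j = Pr[B = j]` and
`Δ = x 1 1 - a 1 * b 1`. Since `E[A | B = 1] - E[A] = Δ / b 1`, the claim is `2 Δ² ≤ I(A;B)`.

All four cells satisfy `|x i j - a i * b j| = |Δ|`, and `I(A;B)` is the sum over the cells of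
`x log (x / y) - x + y`, where `y = a i * b j`. Each summand is at least the Hellinger term
`(√x - √y)²`, which in turn is at least `(x - y)² * 2 (1 - (x + y))` (`two_mul_sq_le_relEnt`).
Both `x` and `y` sum to `1`, so adding the four bounds gives `I(A;B) ≥ 4 Δ²`
(`sq_le_sum_cells`), which is more than needed.
-/

open MeasureTheory

/-- Shannon entropy (in nats) of a random variable `A` on the probability space `(Ω, μ)`,
defined via the probabilities of its (finitely many nonzero) level sets. -/
noncomputable def entropy {Ω α : Type*} [MeasurableSpace Ω] (μ : Measure Ω) (A : Ω → α) : ℝ :=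
  -∑' a : α, (μ (A ⁻¹' {a})).toReal * Real.log (μ (A ⁻¹' {a})).toReal

/-- Mutual information (in nats): `I(A;B) = H(A) + H(B) - H(A,B)`. -/
noncomputable def mutualInfo {Ω α β : Type*} [MeasurableSpace Ω] (μ : Measure Ω)
    (A : Ω → α) (B : Ω → β) : ℝ :=
  entropy μ A + entropy μ B - entropy μ (fun ω => (A ω, B ω))

/-- The Hellinger lower bound for one summand of the relative entropy, weakened with
`4 s (1 - s) ≤ 1` at `s = x + y` to a form that can be summed over the cells. -/
lemma two_mul_sq_le_relEnt {x y : ℝ} (hx : 0 ≤ x) (hy : 0 ≤ y) (h : y = 0 → x = 0) :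
    (x - y) ^ 2 * (2 * (1 - (x + y))) ≤ x * Real.log x - x * Real.log y - x + y := by
  have hellinger : (√x - √y) ^ 2 ≤ x * Real.log x - x * Real.log y - x + y := by
    have e1 := Real.sq_sqrt hx
    have e2 := Real.sq_sqrt hy
    rcases hx.eq_or_lt with rfl | hx0
    · simp [e2]
    have hy0 : 0 < y := lt_of_le_of_ne hy fun h0 => hx0.ne' (h h0.symm)
    have hu := Real.sqrt_pos.2 hx0
    have hv := Real.sqrt_pos.2 hy0
    -- `log t ≤ t - 1` at `t = √y / √x`
    have hl := Real.log_le_sub_one_of_pos (div_pos hv hu)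
    rw [Real.log_div hv.ne' hu.ne', Real.log_sqrt hy, Real.log_sqrt hx] at hl
    have hm := mul_le_mul_of_nonneg_left hl hx
    have e3 : x * (√y / √x - 1) = √x * √y - x := by
      rw [mul_sub, mul_one]
      congr 1
      rw [mul_div_assoc', div_eq_iff hu.ne']
      linear_combination (-√y) * e1
    rw [e3] at hm
    nlinarith
  refine le_trans ?_ hellinger
  obtain ⟨u, hu⟩ : ∃ u, u = √x := ⟨_, rfl⟩
  obtain ⟨v, hv⟩ : ∃ v, v = √y := ⟨_, rfl⟩
  have e1 : x = u ^ 2 := by rw [hu, Real.sq_sqrt hx]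
  have e2 : y = v ^ 2 := by rw [hv, Real.sq_sqrt hy]
  rw [← hu, ← hv, e1, e2]
  have key : (u + v) ^ 2 * (2 * (1 - (u ^ 2 + v ^ 2))) ≤ 1 := by
    rcases le_total (u ^ 2 + v ^ 2) 1 with h1 | h1
    · have : (u + v) ^ 2 ≤ 2 * (u ^ 2 + v ^ 2) := by nlinarith [sq_nonneg (u - v)]
      nlinarith [mul_le_mul_of_nonneg_right this (by linarith : 0 ≤ 2 * (1 - (u ^ 2 + v ^ 2))),
        sq_nonneg (2 * (u ^ 2 + v ^ 2) - 1)]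
    · nlinarith [mul_nonneg (sq_nonneg (u + v)) (sub_nonneg.2 h1)]
  calc (u ^ 2 - v ^ 2) ^ 2 * (2 * (1 - (u ^ 2 + v ^ 2)))
      = (u - v) ^ 2 * ((u + v) ^ 2 * (2 * (1 - (u ^ 2 + v ^ 2)))) := by ring
    _ ≤ (u - v) ^ 2 * 1 := mul_le_mul_of_nonneg_left key (sq_nonneg _)
    _ = (u - v) ^ 2 := mul_one _

/-- The bound for one cell of a joint distribution with marginals `a` and `b`; when a marginal
vanishes so does `x`, so splitting `log (a * b)` costs nothing. -/
lemma cell_bound {x a b : ℝ} (hx : 0 ≤ x) (ha : x ≤ a) (hb : x ≤ b) :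
    (x - a * b) ^ 2 * (2 * (1 - (x + a * b))) ≤
      x * Real.log x - x * (Real.log a + Real.log b) - x + a * b := by
  rcases hx.eq_or_lt with rfl | hx0
  · simpa using two_mul_sq_le_relEnt le_rfl (mul_nonneg ha hb) (fun _ => rfl)
  · have ha0 := hx0.trans_le ha
    have hb0 := hx0.trans_le hb
    rw [← Real.log_mul ha0.ne' hb0.ne']
    have hab := mul_pos ha0 hb0
    exact two_mul_sq_le_relEnt hx hab.le fun h0 => absurd h0.symm (ne_of_lt hab)

/-- A Pinsker-type inequality for a `2 × 2` joint distribution. -/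
lemma sq_le_sum_cells {x₁₁ x₁₀ x₀₁ x₀₀ a₁ a₀ b₁ b₀ : ℝ}
    (h₁₁ : 0 ≤ x₁₁) (h₁₀ : 0 ≤ x₁₀) (h₀₁ : 0 ≤ x₀₁) (h₀₀ : 0 ≤ x₀₀)
    (ea₁ : x₁₁ + x₁₀ = a₁) (ea₀ : x₀₁ + x₀₀ = a₀)
    (eb₁ : x₁₁ + x₀₁ = b₁) (eb₀ : x₁₀ + x₀₀ = b₀) (ea : a₁ + a₀ = 1) :
    4 * (x₁₁ - a₁ * b₁) ^ 2 ≤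
      x₁₁ * Real.log x₁₁ + x₁₀ * Real.log x₁₀ + x₀₁ * Real.log x₀₁ + x₀₀ * Real.log x₀₀
        - (a₁ * Real.log a₁ + a₀ * Real.log a₀) - (b₁ * Real.log b₁ + b₀ * Real.log b₀) := by
  have c₁₁ := cell_bound (a := a₁) (b := b₁) h₁₁ (by linarith) (by linarith)
  have c₁₀ := cell_bound (a := a₁) (b := b₀) h₁₀ (by linarith) (by linarith)
  have c₀₁ := cell_bound (a := a₀) (b := b₁) h₀₁ (by linarith) (by linarith)
  have c₀₀ := cell_bound (a := a₀) (b := b₀) h₀₀ (by linarith) (by linarith)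
  have eb : b₁ + b₀ = 1 := by linarith
  have d₁₀ : x₁₀ - a₁ * b₀ = -(x₁₁ - a₁ * b₁) := by linear_combination ea₁ - a₁ * eb
  have d₀₁ : x₀₁ - a₀ * b₁ = -(x₁₁ - a₁ * b₁) := by linear_combination eb₁ - b₁ * ea
  have d₀₀ : x₀₀ - a₀ * b₀ = x₁₁ - a₁ * b₁ := by
    linear_combination eb₀ - ea₁ - b₀ * ea + a₁ * eb
  rw [d₁₀, neg_sq] at c₁₀
  rw [d₀₁, neg_sq] at c₀₁
  rw [d₀₀] at c₀₀
  have sx : x₁₁ + x₁₀ + x₀₁ + x₀₀ = 1 := by linarith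
  have sy : a₁ * b₁ + a₁ * b₀ + a₀ * b₁ + a₀ * b₀ = 1 := by
    linear_combination (b₁ + b₀) * ea + eb
  have hs := add_le_add (add_le_add c₁₁ c₁₀) (add_le_add c₀₁ c₀₀)
  generalize x₁₁ - a₁ * b₁ = D at hs ⊢
  have l1 : a₁ * Real.log a₁ = (x₁₁ + x₁₀) * Real.log a₁ := by rw [ea₁]
  have l2 : a₀ * Real.log a₀ = (x₀₁ + x₀₀) * Real.log a₀ := by rw [ea₀]
  have l3 : b₁ * Real.log b₁ = (x₁₁ + x₀₁) * Real.log b₁ := by rw [eb₁]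
  have l4 : b₀ * Real.log b₀ = (x₁₀ + x₀₀) * Real.log b₀ := by rw [eb₀]
  rw [l1, l2, l3, l4]
  have hl : D ^ 2 * (2 * (1 - (x₁₁ + a₁ * b₁))) + D ^ 2 * (2 * (1 - (x₁₀ + a₁ * b₀))) +
      (D ^ 2 * (2 * (1 - (x₀₁ + a₀ * b₁))) + D ^ 2 * (2 * (1 - (x₀₀ + a₀ * b₀)))) =
      4 * D ^ 2 := by
    linear_combination (-2 * D ^ 2) * sx + (-2 * D ^ 2) * sy
  rw [hl] at hs
  linarith

section Binary

variable {Ω : Type*} [MeasurableSpace Ω] {μ : Measure Ω} {A B : Ω → ℝ}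

lemma entropy_binary (hA : ∀ ω, A ω = 0 ∨ A ω = 1) :
    entropy μ A = -(μ.real (A ⁻¹' {1}) * Real.log (μ.real (A ⁻¹' {1})) +
      μ.real (A ⁻¹' {0}) * Real.log (μ.real (A ⁻¹' {0}))) := by
  unfold entropy
  rw [tsum_eq_sum (s := {1, 0})]
  · rw [Finset.sum_pair one_ne_zero]
    rfl
  · intro a ha
    have : A ⁻¹' {a} = ∅ := by
      ext ω
      rcases hA ω with h | h <;> simp_all [eq_comm]
    simp [this]

lemma entropy_pair_binary (hA : ∀ ω, A ω = 0 ∨ A ω = 1) (hB : ∀ ω, B ω = 0 ∨ B ω = 1) :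
    entropy μ (fun ω => (A ω, B ω)) =
      -(μ.real (A ⁻¹' {1} ∩ B ⁻¹' {1}) * Real.log (μ.real (A ⁻¹' {1} ∩ B ⁻¹' {1})) +
        μ.real (A ⁻¹' {1} ∩ B ⁻¹' {0}) * Real.log (μ.real (A ⁻¹' {1} ∩ B ⁻¹' {0})) +
        μ.real (A ⁻¹' {0} ∩ B ⁻¹' {1}) * Real.log (μ.real (A ⁻¹' {0} ∩ B ⁻¹' {1})) +
        μ.real (A ⁻¹' {0} ∩ B ⁻¹' {0}) * Real.log (μ.real (A ⁻¹' {0} ∩ B ⁻¹' {0}))) := by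
  have hpre : ∀ i j : ℝ, (fun ω => (A ω, B ω)) ⁻¹' {(i, j)} = A ⁻¹' {i} ∩ B ⁻¹' {j} := by
    intro i j
    ext ω
    simp
  unfold entropy
  rw [tsum_eq_sum (s := ({1, 0} : Finset ℝ) ×ˢ ({1, 0} : Finset ℝ))]
  · rw [Finset.sum_product, Finset.sum_pair one_ne_zero, Finset.sum_pair one_ne_zero,
      Finset.sum_pair one_ne_zero]
    simp only [hpre, ← measureReal_def]
    ring
  · rintro ⟨i, j⟩ hij
    have : (fun ω => (A ω, B ω)) ⁻¹' {(i, j)} = ∅ := by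
      ext ω
      rcases hA ω with h | h <;> rcases hB ω with h' | h' <;> simp_all [eq_comm]
    simp [this]

/-- Additivity over the fibres of a `{0,1}`-valued variable, which is only required
to be measurable up to null sets. -/
lemma measureReal_inter_add [IsFiniteMeasure μ] (hB : ∀ ω, B ω = 0 ∨ B ω = 1)
    (hm : NullMeasurableSet (B ⁻¹' {1}) μ) (S : Set Ω) :
    μ.real (S ∩ B ⁻¹' {1}) + μ.real (S ∩ B ⁻¹' {0}) = μ.real S := by
  have : S ∩ B ⁻¹' {0} = S \ B ⁻¹' {1} := by
    ext ω
    rcases hB ω with h | h <;> simp [h]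
  rw [this]
  exact measureReal_inter_add_sdiff₀ hm

lemma integral_binary (hA : ∀ ω, A ω = 0 ∨ A ω = 1)
    (hm : NullMeasurableSet (A ⁻¹' {1}) μ) : ∫ ω, A ω ∂μ = μ.real (A ⁻¹' {1}) := by
  have : A = (A ⁻¹' {1}).indicator (fun _ => (1 : ℝ)) := by
    ext ω
    rcases hA ω with h | h <;> simp [Set.indicator, h]
  conv_lhs => rw [this]
  rw [integral_indicator₀ hm]
  simp

/-- Positivity of the expectation rules out the junk value of the integral, so the variable
is measurable up to null sets. -/
lemma nullMeasurableSet_of_integral_pos (h : 0 < ∫ ω, A ω ∂μ) :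
    NullMeasurableSet (A ⁻¹' {1}) μ := by
  have hi : Integrable A μ := by
    by_contra hn
    exact h.ne' (integral_undef hn)
  exact hi.aestronglyMeasurable.aemeasurable.nullMeasurable (measurableSet_singleton 1)

end Binary

/-- Lemma A.1: for `{0,1}`-valued random variables `A, B` with `E[A] > 0` and `E[B] > 0`,
`|E[A | B = 1] − E[A]| ≤ sqrt(I(A;B)/2) / E[B]`, where `E[A | B = 1]` is the expectation
of `A` under the conditional probability measure given the event `{B = 1}`. -/
theorem abs_condExp_sub_exp_le_sqrt_mutualInfo_div
    {Ω : Type*} [MeasurableSpace Ω] (μ : Measure Ω) [IsProbabilityMeasure μ]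
    (A B : Ω → ℝ) (hA : ∀ ω, A ω = 0 ∨ A ω = 1) (hB : ∀ ω, B ω = 0 ∨ B ω = 1)
    (hEA : 0 < ∫ ω, A ω ∂μ) (hEB : 0 < ∫ ω, B ω ∂μ) :
    |(∫ ω, A ω ∂(ProbabilityTheory.cond μ (B ⁻¹' {1}))) - ∫ ω, A ω ∂μ| ≤
      Real.sqrt (mutualInfo μ A B / 2) / ∫ ω, B ω ∂μ := by
  have mA := nullMeasurableSet_of_integral_pos hEA
  have mB := nullMeasurableSet_of_integral_pos hEB
  have hcond : ∫ ω, A ω ∂(ProbabilityTheory.cond μ (B ⁻¹' {1})) =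
      (μ.real (B ⁻¹' {1}))⁻¹ * μ.real (A ⁻¹' {1} ∩ B ⁻¹' {1}) := by
    have mA' : NullMeasurableSet (A ⁻¹' {1}) (μ.restrict (B ⁻¹' {1})) :=
      mA.mono_ac Measure.restrict_le_self.absolutelyContinuous
    rw [ProbabilityTheory.cond, integral_smul_measure, integral_binary hA mA',
      measureReal_def, Measure.restrict_apply₀ mA', ENNReal.toReal_inv]
    rfl
  rw [integral_binary hB mB] at hEB
  rw [hcond, integral_binary hA mA, integral_binary hB mB]
  have ea := measureReal_inter_add hA mA Set.univ
  simp only [Set.univ_inter, probReal_univ] at ea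
  have eb₁ := measureReal_inter_add hA mA (B ⁻¹' {1})
  have eb₀ := measureReal_inter_add hA mA (B ⁻¹' {0})
  rw [Set.inter_comm, Set.inter_comm (B ⁻¹' {1})] at eb₁
  rw [Set.inter_comm, Set.inter_comm (B ⁻¹' {0})] at eb₀
  have key := sq_le_sum_cells measureReal_nonneg measureReal_nonneg measureReal_nonneg
    measureReal_nonneg (measureReal_inter_add hB mB (A ⁻¹' {1}))
    (measureReal_inter_add hB mB (A ⁻¹' {0})) eb₁ eb₀ ea
  have hI : 4 * (μ.real (A ⁻¹' {1} ∩ B ⁻¹' {1}) -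
      μ.real (A ⁻¹' {1}) * μ.real (B ⁻¹' {1})) ^ 2 ≤ mutualInfo μ A B := by
    rw [mutualInfo, entropy_binary hA, entropy_binary hB, entropy_pair_binary hA hB]
    linarith
  rw [le_div_iff₀ hEB]
  apply Real.le_sqrt_of_sq_le
  rw [mul_pow, sq_abs, ← mul_pow, sub_mul, mul_right_comm, inv_mul_cancel₀ hEB.ne', one_mul]
  nlinarith [sq_nonneg (μ.real (A ⁻¹' {1} ∩ B ⁻¹' {1}) -
    μ.real (A ⁻¹' {1}) * μ.real (B ⁻¹' {1}))]
end

section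
/- (Lemma D.1, robustness of least squares classifiers) Let x_1,...,x_n ∈ R^d and y_1,...,y_n ∈ {1,...,k}, and let f : R^d → R^k be a linear map minimizing the least-squares loss Σ_{i∈[n]} Σ_{j∈[k]} (f(x_i)_j − 1[y_i=j])². Suppose that for at least a p fraction of the indices i, argmax_{j∈[k]} f(x_i)_j = y_i and the maximum over j of f(x_i)_j exceeds the second-largest value by at least γ > 0. Let ỹ be the η-noisy labels and let f̃ be a linear map minimizing the least-squares loss Σ_{i∈[n]} Σ_{j∈[k]} (f̃(x_i)_j − 1[ỹ_i=j])². Then, in expectation over the noise, argmax_{j∈[k]} f̃(x_i)_j = y_i for at least a p − 4η/γ² fraction of the indices i. -/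
/-!
Write `Y` and `Ỹ` for the one-hot encodings of the clean and noisy labels. The normal equations
say that the residuals `f(x i) - Y i` and `f̃(x i) - Ỹ i` are orthogonal to every linear map
evaluated at the data points. Testing their difference against `g = f̃ - f` gives
`∑ g² = ∑ (Ỹ - Y) g`, hence `∑ g² ≤ ∑ (Ỹ - Y)²`, which is at most twice the number of
resampled labels (`sum_sq_sub_le`).

If `i` has margin `γ` under `f` but is not classified as `y i` by `f̃`, then two coordinates of
`g(x i)` differ by at least `γ`, so `∑ j, g(x i)_j² ≥ γ²/2`. Thus every resampled label
accounts for at most `4/γ²` lost indices (`card_margin_le`), and the expected number of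
resampled labels is `η n`.
-/

open MeasureTheory
open scoped ENNReal

instance (priority := 100) optionMeasurableSpace {α : Type*} : MeasurableSpace (Option α) := ⊤

/-- Distribution of a single noise coordinate: with probability `1 - η` the label is kept
(`none`), and with probability `η` it is replaced by a uniform label (`some b`, each with
probability `η/k`). -/
noncomputable def noiseMeasure (k : ℕ) (η : ℝ) : Measure (Option (Fin k)) :=
  ENNReal.ofReal (1 - η) • Measure.dirac none +
    ∑ b : Fin k, ENNReal.ofReal (η / k) • Measure.dirac (some b)

/-- The joint distribution of the `n` independent noise coordinates. -/
noncomputable def noisePi (n k : ℕ) (η : ℝ) : Measure (Fin n → Option (Fin k)) :=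
  Measure.pi fun _ => noiseMeasure k η

/-- The least-squares loss of a linear classifier `f` on the points `x` with labels `y`
(one-hot encoded). -/
noncomputable def lsLoss {d k n : ℕ} (x : Fin n → Fin d → ℝ) (y : Fin n → Fin k)
    (f : (Fin d → ℝ) →ₗ[ℝ] (Fin k → ℝ)) : ℝ :=
  ∑ i, ∑ j, (f (x i) j - if y i = j then 1 else 0) ^ 2

/-- Normal equations: the residual of a least-squares minimizer is orthogonal to every
linear map evaluated at the data points. -/
lemma lsLoss_normal_eq {d k n : ℕ} (x : Fin n → Fin d → ℝ) (y : Fin n → Fin k)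
    (f : (Fin d → ℝ) →ₗ[ℝ] (Fin k → ℝ))
    (hf : ∀ g : (Fin d → ℝ) →ₗ[ℝ] (Fin k → ℝ), lsLoss x y f ≤ lsLoss x y g)
    (h : (Fin d → ℝ) →ₗ[ℝ] (Fin k → ℝ)) :
    ∑ i, ∑ j, (f (x i) j - if y i = j then 1 else 0) * h (x i) j = 0 := by
  set A := ∑ i, ∑ j, (f (x i) j - if y i = j then 1 else 0) * h (x i) j with hA
  set B := ∑ i, ∑ j, h (x i) j ^ 2 with hB
  have key : ∀ t : ℝ, 0 ≤ B * (t * t) + (2 * A) * t + 0 := by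
    intro t
    have h1 := hf (f + t • h)
    have h2 : lsLoss x y (f + t • h) = lsLoss x y f + (B * (t * t) + (2 * A) * t) := by
      simp only [lsLoss, hA, hB, Finset.sum_mul, Finset.mul_sum, ← Finset.sum_add_distrib]
      refine Finset.sum_congr rfl fun i _ => Finset.sum_congr rfl fun j _ => ?_
      simp only [LinearMap.add_apply, LinearMap.smul_apply, Pi.add_apply, Pi.smul_apply,
        smul_eq_mul]
      ring
    linarith
  have h3 := discrim_le_zero key
  simp only [discrim] at h3
  nlinarith [sq_nonneg A]

/-- Least-squares predictions are stable: the squared distance between two fits is at most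
the squared distance between the one-hot labels, i.e. twice the number of disagreements. -/
lemma sum_sq_sub_le {d k n : ℕ} (x : Fin n → Fin d → ℝ) (y z : Fin n → Fin k)
    (f g : (Fin d → ℝ) →ₗ[ℝ] (Fin k → ℝ))
    (hf : ∀ h : (Fin d → ℝ) →ₗ[ℝ] (Fin k → ℝ), lsLoss x y f ≤ lsLoss x y h)
    (hg : ∀ h : (Fin d → ℝ) →ₗ[ℝ] (Fin k → ℝ), lsLoss x z g ≤ lsLoss x z h) :
    ∑ i, ∑ j, (g (x i) j - f (x i) j) ^ 2 ≤ ∑ i, if z i = y i then (0 : ℝ) else 2 := by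
  have h1 := lsLoss_normal_eq x y f hf (g - f)
  have h2 := lsLoss_normal_eq x z g hg (g - f)
  have h3 : ∑ i, ∑ j, (g (x i) j - f (x i) j) ^ 2 ≤
      ∑ i, ∑ j, ((if z i = j then (1 : ℝ) else 0) - if y i = j then 1 else 0) ^ 2 := by
    -- For `a = g - f` and `b` the label difference, `‖b‖² - ‖a‖² = ‖a - b‖² - 2⟨a - b, a⟩`, and
    -- the inner product vanishes by the normal equations.
    have h4 : ∑ i, ∑ j, ((if z i = j then (1 : ℝ) else 0) - if y i = j then 1 else 0) ^ 2
        - ∑ i, ∑ j, (g (x i) j - f (x i) j) ^ 2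
        = ∑ i, ∑ j, ((g (x i) j - if z i = j then 1 else 0)
            - (f (x i) j - if y i = j then 1 else 0)) ^ 2
          - 2 * (∑ i, ∑ j, (g (x i) j - if z i = j then 1 else 0) * (g - f) (x i) j
          - ∑ i, ∑ j, (f (x i) j - if y i = j then 1 else 0) * (g - f) (x i) j) := by
      simp only [Finset.mul_sum, ← Finset.sum_sub_distrib]
      refine Finset.sum_congr rfl fun i _ => Finset.sum_congr rfl fun j _ => ?_
      simp only [LinearMap.sub_apply, Pi.sub_apply]
      ring
    have h5 : 0 ≤ ∑ i, ∑ j, ((g (x i) j - if z i = j then 1 else 0)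
            - (f (x i) j - if y i = j then 1 else 0)) ^ 2 :=
      Finset.sum_nonneg fun i _ => Finset.sum_nonneg fun j _ => sq_nonneg _
    rw [h1, h2] at h4
    linarith
  refine h3.trans (Finset.sum_le_sum fun i _ => ?_)
  split_ifs with h
  · simp [h]
  · have h6 : ∀ j, ((if z i = j then (1 : ℝ) else 0) - if y i = j then 1 else 0) ^ 2
        = (if z i = j then (1 : ℝ) else 0) + if y i = j then 1 else 0 := by
      intro j
      by_cases hz : z i = j
      · have : y i ≠ j := fun hy => h (hz.trans hy.symm)
        simp [hz, this]
      · by_cases hy : y i = j <;> simp [hz, hy]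
    simp only [h6, Finset.sum_add_distrib, Finset.sum_ite_eq, Finset.mem_univ, if_true]
    norm_num

/-- Deterministic form of the theorem: each disagreement between the label vectors costs at
most `4 / γ ^ 2` of the indices classified with margin `γ`. -/
lemma card_margin_le {d k n : ℕ} (x : Fin n → Fin d → ℝ) (y z : Fin n → Fin k)
    (γ : ℝ) (hγ : 0 < γ) (f g : (Fin d → ℝ) →ₗ[ℝ] (Fin k → ℝ))
    (hf : ∀ h : (Fin d → ℝ) →ₗ[ℝ] (Fin k → ℝ), lsLoss x y f ≤ lsLoss x y h)
    (hg : ∀ h : (Fin d → ℝ) →ₗ[ℝ] (Fin k → ℝ), lsLoss x z g ≤ lsLoss x z h) :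
    (Nat.card {i : Fin n // ∀ j, j ≠ y i → f (x i) j + γ ≤ f (x i) (y i)} : ℝ) ≤
      (Nat.card {i : Fin n // ∀ j, j ≠ y i → g (x i) j < g (x i) (y i)} : ℝ)
        + 4 / γ ^ 2 * ∑ i, if z i = y i then (0 : ℝ) else 1 := by
  classical
  have h1 := sum_sq_sub_le x y z f g hf hg
  have h2 : ∑ i, (if z i = y i then (0 : ℝ) else 2)
      = 2 * ∑ i, if z i = y i then (0 : ℝ) else 1 := by
    rw [Finset.mul_sum]
    exact Finset.sum_congr rfl fun i _ => by split_ifs <;> norm_num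
  have h3 : ∀ i, (if ∀ j, j ≠ y i → f (x i) j + γ ≤ f (x i) (y i) then (1 : ℝ) else 0) ≤
      (if ∀ j, j ≠ y i → g (x i) j < g (x i) (y i) then (1 : ℝ) else 0)
        + 2 / γ ^ 2 * ∑ j, (g (x i) j - f (x i) j) ^ 2 := by
    intro i
    have hS : 0 ≤ ∑ j, (g (x i) j - f (x i) j) ^ 2 :=
      Finset.sum_nonneg fun j _ => sq_nonneg _
    have hS' : 0 ≤ 2 / γ ^ 2 * ∑ j, (g (x i) j - f (x i) j) ^ 2 := by positivity
    by_cases hm : ∀ j, j ≠ y i → f (x i) j + γ ≤ f (x i) (y i)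
    · by_cases hc : ∀ j, j ≠ y i → g (x i) j < g (x i) (y i)
      · rw [if_pos hm, if_pos hc]; linarith
      · rw [if_pos hm, if_neg hc]
        push Not at hc
        obtain ⟨j, hj, hle⟩ := hc
        have hmj := hm j hj
        have hpair : (g (x i) j - f (x i) j) ^ 2 + (g (x i) (y i) - f (x i) (y i)) ^ 2
            ≤ ∑ j, (g (x i) j - f (x i) j) ^ 2 := by
          rw [← Finset.sum_pair (f := fun j => (g (x i) j - f (x i) j) ^ 2) hj]
          exact Finset.sum_le_sum_of_subset_of_nonneg (Finset.subset_univ _)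
            fun _ _ _ => sq_nonneg _
        -- `a - b ≥ γ` forces `a² + b² ≥ γ² / 2`.
        have hhalf : γ ^ 2 / 2 ≤ ∑ j, (g (x i) j - f (x i) j) ^ 2 := by
          refine le_trans ?_ hpair
          have hd : γ ≤ (g (x i) j - f (x i) j) - (g (x i) (y i) - f (x i) (y i)) := by
            linarith
          nlinarith [sq_nonneg ((g (x i) j - f (x i) j) + (g (x i) (y i) - f (x i) (y i)))]
        calc (1 : ℝ) = 2 / γ ^ 2 * (γ ^ 2 / 2) := by field_simp
          _ ≤ 2 / γ ^ 2 * ∑ j, (g (x i) j - f (x i) j) ^ 2 := by gcongr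
          _ = _ := by ring
    · rw [if_neg hm]
      split_ifs <;> linarith
  have h4 := Finset.sum_le_sum fun i (_ : i ∈ Finset.univ) => h3 i
  rw [Finset.sum_add_distrib, ← Finset.mul_sum] at h4
  simp only [Nat.card_eq_fintype_card, Fintype.card_subtype]
  simp only [Finset.sum_boole] at h4
  refine h4.trans (add_le_add (le_of_eq rfl) ?_)
  calc 2 / γ ^ 2 * ∑ i, ∑ j, (g (x i) j - f (x i) j) ^ 2
      ≤ 2 / γ ^ 2 * (2 * ∑ i, if z i = y i then (0 : ℝ) else 1) := by
        rw [← h2]; gcongr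
    _ = _ := by ring

lemma isProbabilityMeasure_noiseMeasure {k : ℕ} (hk : 2 ≤ k) {η : ℝ} (hη0 : 0 < η)
    (hη1 : η < 1) : IsProbabilityMeasure (noiseMeasure k η) := by
  refine ⟨?_⟩
  have hk' : (k : ℝ) ≠ 0 := by positivity
  simp only [noiseMeasure, Measure.add_apply, Measure.smul_apply, Measure.finsetSum_apply,
    measure_univ, smul_eq_mul, mul_one, Finset.sum_const, Finset.card_univ, Fintype.card_fin,
    nsmul_eq_mul]
  rw [← ENNReal.ofReal_natCast, ← ENNReal.ofReal_mul (by positivity),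
    ← ENNReal.ofReal_add (by linarith) (by positivity), mul_div_cancel₀ _ hk']
  simp

lemma integral_noiseMeasure {k : ℕ} (hk : 2 ≤ k) {η : ℝ} (hη0 : 0 < η) (hη1 : η < 1) :
    ∫ a, (if a = none then (0 : ℝ) else 1) ∂(noiseMeasure k η) = η := by
  have := isProbabilityMeasure_noiseMeasure hk hη0 hη1
  have hms : MeasurableSingletonClass (Option (Fin k)) := ⟨fun _ => trivial⟩
  have hr : (noiseMeasure k η).real {none} = 1 - η := by
    simp only [Measure.real, noiseMeasure, Measure.add_apply, Measure.smul_apply,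
      Measure.finsetSum_apply]
    simp [hη1.le]
  have h : ∀ a : Option (Fin k), (if a = none then (0 : ℝ) else 1)
      = 1 - Set.indicator {none} (fun _ => (1 : ℝ)) a := by
    intro a
    by_cases ha : a = none <;> simp [ha]
  simp only [h]
  rw [integral_sub Integrable.of_finite Integrable.of_finite,
    integral_indicator (measurableSet_singleton _)]
  rw [integral_const, setIntegral_const, hr]
  simp

/-- Lemma D.1 (robustness of least squares classifiers).  Let `f` be a linear map
minimizing the least-squares loss against the one-hot encoding of clean labels `y`, and
suppose that for at least a `p` fraction of the indices `i` the coordinate `y i` of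
`f(x i)` exceeds every other coordinate by at least `γ > 0` (so the argmax is `y i` with
margin `γ`).  If `f̃ N` minimizes the least-squares loss against the `η`-noisy labels
`(N i).getD (y i)` for each noise outcome `N`, then the expected number of indices on
which the (unique) argmax of `f̃ N (x i)` equals `y i` is at least `(p − 4η/γ²)·n`. -/
theorem least_squares_robustness {d k n : ℕ} (hk : 2 ≤ k) (hn : 0 < n)
    {η : ℝ} (hη0 : 0 < η) (hη1 : η < 1)
    (x : Fin n → Fin d → ℝ) (y : Fin n → Fin k) (p γ : ℝ) (hγ : 0 < γ)
    (f : (Fin d → ℝ) →ₗ[ℝ] (Fin k → ℝ))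
    (hf : ∀ g : (Fin d → ℝ) →ₗ[ℝ] (Fin k → ℝ), lsLoss x y f ≤ lsLoss x y g)
    (hmargin : p * n ≤
      (Nat.card {i : Fin n // ∀ j, j ≠ y i → f (x i) j + γ ≤ f (x i) (y i)} : ℝ))
    (ftil : (Fin n → Option (Fin k)) → ((Fin d → ℝ) →ₗ[ℝ] (Fin k → ℝ)))
    (hftil : ∀ (N : Fin n → Option (Fin k)) (g : (Fin d → ℝ) →ₗ[ℝ] (Fin k → ℝ)),
      lsLoss x (fun i => (N i).getD (y i)) (ftil N) ≤
        lsLoss x (fun i => (N i).getD (y i)) g) :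
    (p - 4 * η / γ ^ 2) * n ≤
      ∫ N, (Nat.card {i : Fin n //
          ∀ j, j ≠ y i → ftil N (x i) j < ftil N (x i) (y i)} : ℝ)
        ∂(noisePi n k η) := by
  have := isProbabilityMeasure_noiseMeasure hk hη0 hη1
  have hms : MeasurableSingletonClass (Option (Fin k)) := ⟨fun _ => trivial⟩
  have hprob : IsProbabilityMeasure (noisePi n k η) := by
    unfold noisePi; infer_instance
  have hexp : ∫ N, ∑ i, (if N i = none then (0 : ℝ) else 1) ∂(noisePi n k η) = n * η := by
    rw [integral_finsetSum _ fun _ _ => Integrable.of_finite]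
    have hi : ∀ i : Fin n,
        ∫ N, (if N i = none then (0 : ℝ) else 1) ∂(noisePi n k η) = η := by
      intro i
      have hmp : MeasurePreserving (Function.eval i) (noisePi n k η) (noiseMeasure k η) :=
        measurePreserving_eval (fun _ : Fin n => noiseMeasure k η) i
      refine Eq.trans ?_ (integral_noiseMeasure hk hη0 hη1)
      rw [← hmp.map_eq, integral_map hmp.measurable.aemeasurable
        Integrable.of_finite.aestronglyMeasurable]
    simp [hi]
  have hpt : ∀ N : Fin n → Option (Fin k),
      p * n - 4 / γ ^ 2 * ∑ i, (if N i = none then (0 : ℝ) else 1) ≤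
      (Nat.card {i : Fin n // ∀ j, j ≠ y i → ftil N (x i) j < ftil N (x i) (y i)} : ℝ) := by
    intro N
    have h1 := card_margin_le x y (fun i => (N i).getD (y i)) γ hγ f (ftil N) hf (hftil N)
    have h2 : ∑ i, (if (N i).getD (y i) = y i then (0 : ℝ) else 1) ≤
        ∑ i, (if N i = none then (0 : ℝ) else 1) := by
      refine Finset.sum_le_sum fun i _ => ?_
      by_cases hN : N i = none
      · simp [hN]
      · rw [if_neg hN]; split_ifs <;> norm_num
    have h3 : 4 / γ ^ 2 * ∑ i, (if (N i).getD (y i) = y i then (0 : ℝ) else 1) ≤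
        4 / γ ^ 2 * ∑ i, (if N i = none then (0 : ℝ) else 1) := by gcongr
    linarith
  calc (p - 4 * η / γ ^ 2) * n
      = ∫ N, (p * n - 4 / γ ^ 2 * ∑ i, (if N i = none then (0 : ℝ) else 1))
          ∂(noisePi n k η) := by
        rw [integral_sub Integrable.of_finite Integrable.of_finite, integral_const,
          integral_const_mul, hexp]
        simp only [probReal_univ, one_smul]
        ring
    _ ≤ _ := integral_mono Integrable.of_finite Integrable.of_finite hpt
end
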